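/- In the autonomous case with ω < π², the global attractor 𝒜⁺ of the multivalued semiflow G⁺ generated by the non-negative solutions satisfies 𝒜⁺ ⊂ C^∞([0,1]); that is, every element of 𝒜⁺ is a C^∞ function on [0,1]. -/

import Mathlib

open MeasureTheory Set

noncomputable section

/-- Lebesgue measure restricted to the spatial interval `(0,1)`. -/
def μ01 : Measure ℝ := volume.restrict (Ioo (0:ℝ) 1)

/-- `H = L²(0,1)`. -/
abbrev Hsp : Type := Lp ℝ 2 μ01

/-- The Heaviside multifunction. -/
def heaviside (s : ℝ) : Set ℝ :=
  if s < 0 then {-1} else if s = 0 then Icc (-1) 1 else {1}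

/-- Condition (Cond1). -/
structure Cond1 (b ω : ℝ → ℝ) (b0 b1 ω0 ω1 : ℝ) : Prop where
  contb : Continuous b
  contω : Continuous ω
  b0pos : 0 < b0
  blb : ∀ t, b0 ≤ b t
  bub : ∀ t, b t ≤ b1
  ω0nonneg : 0 ≤ ω0
  ωlb : ∀ t, ω0 ≤ ω t
  ωub : ∀ t, ω t ≤ ω1

/-- `v ∈ H²(0,1) ∩ H¹₀(0,1)` with (weak) second derivative `w ∈ L²(0,1)`:
`v` has a representative that is continuous on `[0,1]`, vanishes at the boundary,
is differentiable on `(0,1)` and whose derivative is an antiderivative of `w`. -/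
def InDomainA (v w : Hsp) : Prop :=
  ∃ vt : ℝ → ℝ, ContinuousOn vt (Icc 0 1) ∧ vt 0 = 0 ∧ vt 1 = 0 ∧
    (∀ᵐ x ∂μ01, vt x = v x) ∧
    ∃ g : ℝ → ℝ,
      (∀ x ∈ Ioo (0:ℝ) 1, HasDerivAt vt (g x) x) ∧
      ∀ x ∈ Ioo (0:ℝ) 1, ∀ y ∈ Ioo (0:ℝ) 1, g x - g y = ∫ z in y..x, w z

/-- A strong solution of the inclusion on `[τ,∞)`, with explicit data:
`r` is the `L²`-selection, `u'` the time derivative, `uxx` the second spatial derivative. -/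
structure IsStrongSolutionWith (b ω : ℝ → ℝ) (τ : ℝ) (u r u' uxx : ℝ → Hsp) : Prop where
  cont : ContinuousOn u (Ici τ)
  rmem : ∀ T, τ < T → MemLp r 2 (volume.restrict (Ioo τ T))
  sel : ∀ᵐ t ∂(volume.restrict (Ioi τ)), ∀ᵐ x ∂μ01,
      ∃ h ∈ heaviside (u t x), r t x = b t * h + ω t * u t x
  dom : ∀ᵐ t ∂(volume.restrict (Ioi τ)), InDomainA (u t) (uxx t)
  eq : ∀ᵐ t ∂(volume.restrict (Ioi τ)), u' t = r t + uxx t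
  fund : ∀ T1 T2 : ℝ, τ < T1 → T1 < T2 →
      IntervalIntegrable u' volume T1 T2 ∧
      ∀ t ∈ Icc T1 T2, u t = u T1 + ∫ s in T1..t, u' s

/-- A strong solution of the inclusion on `[τ,∞)`. -/
def IsStrongSolution (b ω : ℝ → ℝ) (τ : ℝ) (u : ℝ → Hsp) : Prop :=
  ∃ r u' uxx, IsStrongSolutionWith b ω τ u r u' uxx

/-- The solution is non-negative on `[τ,∞)`. -/
def NonnegOn (u : ℝ → Hsp) (τ : ℝ) : Prop :=
  ∀ t, τ ≤ t → ∀ᵐ x ∂μ01, 0 ≤ u t x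

/-- `v` is positive: it has a continuous representative on `[0,1]`
which is strictly positive on `(0,1)`. -/
def IsPositive (v : Hsp) : Prop :=
  ∃ vt : ℝ → ℝ, ContinuousOn vt (Icc 0 1) ∧ (∀ᵐ x ∂μ01, vt x = v x) ∧
    ∀ x ∈ Ioo (0:ℝ) 1, 0 < vt x


/-- The positive cone `H⁺` of `H = L²(0,1)`. -/
def Hplus : Set Hsp := {v : Hsp | ∀ᵐ x ∂μ01, 0 ≤ v x}

/-- The multivalued semiflow of non-negative solutions of the autonomous problem
applied to a set: `G⁺(t,S) = {u(t) : u ∈ 𝒟⁺(u₀), u₀ ∈ S}`. -/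
def autGplus (b ω : ℝ) (t : ℝ) (S : Set Hsp) : Set Hsp :=
  {y | ∃ u : ℝ → Hsp, u 0 ∈ S ∧
        IsStrongSolution (fun _ => b) (fun _ => ω) 0 u ∧ NonnegOn u 0 ∧ y = u t}

/-- `𝒜⁺` is the global attractor of the autonomous multivalued semiflow `G⁺` on
the positive cone: compact, strictly invariant, attracting bounded subsets of `H⁺`. -/
structure IsGlobalAttractorPlus (b ω : ℝ) (𝒜 : Set Hsp) : Prop where
  subset : 𝒜 ⊆ Hplus
  compact : IsCompact 𝒜
  invariant : ∀ t : ℝ, 0 ≤ t → autGplus b ω t 𝒜 = 𝒜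
  attracting : ∀ B : Set Hsp, B ⊆ Hplus → Bornology.IsBounded B → ∀ ε > (0:ℝ),
    ∃ T : ℝ, ∀ t, T ≤ t → ∀ y ∈ autGplus b ω t B, ∃ a ∈ 𝒜, ‖y - a‖ < ε

/-!
Write `λ n = (π (n + 1))²` for the Dirichlet eigenvalues. The selection `r` of a nonnegative
solution `u` is nonnegative: where `u > 0` because the Heaviside value is `1`, and on the zero set
of `u` because both terms of `r = u_t - u_xx` vanish a.e. there. Hence `u` is a supersolution of the
heat equation, and comparison with the heat flow shows that `u` is positive a.e. at all times after
any time at which it is nonzero. From then on `r = b + ω u`, so the difference `u - W` from the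
stationary solution `W` solves the linear equation `y' = y_xx + ω y` and its `n`-th sine coefficient
is multiplied by `exp (-(λ n - ω) τ)` over a time span `τ`. A sine series with coefficients decaying
like `exp (-λ n τ)` is real analytic, and so is `W`.
-/

open Filter Topology
open scoped Real InnerProductSpace

/-! ### The space `L²(0,1)` -/

instance : IsFiniteMeasure μ01 := by
  unfold μ01
  infer_instance

lemma ae_mem_Ioo_μ01 : ∀ᵐ x ∂μ01, x ∈ Ioo (0 : ℝ) 1 :=
  ae_restrict_mem measurableSet_Ioo

lemma integral_μ01 (f : ℝ → ℝ) : ∫ x, f x ∂μ01 = ∫ x in (0 : ℝ)..1, f x := by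
  rw [intervalIntegral.integral_of_le zero_le_one, integral_Ioc_eq_integral_Ioo, μ01]

lemma memLp_μ01_of_continuousOn {f : ℝ → ℝ} (hf : ContinuousOn f (Icc 0 1)) : MemLp f 2 μ01 := by
  obtain ⟨C, hC⟩ := isCompact_Icc.exists_bound_of_continuousOn hf
  refine MemLp.of_bound ((hf.mono Ioo_subset_Icc_self).aestronglyMeasurable measurableSet_Ioo) C ?_
  filter_upwards [ae_mem_Ioo_μ01] with x hx using hC x (Ioo_subset_Icc_self hx)

lemma integrable_coeFn_μ01 (v : Hsp) : Integrable v μ01 :=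
  (Lp.memLp v).integrable one_le_two

section RealL2

variable {α : Type*} {m : MeasurableSpace α} {μ : Measure α}

lemma inner_eq_integral_mul (f g : Lp ℝ 2 μ) : ⟪f, g⟫_ℝ = ∫ x, f x * g x ∂μ := by
  simp only [L2.inner_def, Real.inner_apply]

lemma inner_toLp_eq_integral_mul {f : α → ℝ} (hf : MemLp f 2 μ) (g : Lp ℝ 2 μ) :
    ⟪hf.toLp, g⟫_ℝ = ∫ x, f x * g x ∂μ := by
  rw [inner_eq_integral_mul]
  exact integral_congr_ae (hf.coeFn_toLp.mul .rfl)

end RealL2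

/-! ### The sine basis -/

/-- The `n`-th normalised eigenfunction `√2 sin((n+1)πx)` of the Dirichlet Laplacian on `(0,1)`,
indexed from `0`. -/
def dirichletSine (n : ℕ) (x : ℝ) : ℝ := √2 * Real.sin ((n + 1 : ℕ) * (π * x))

/-- The eigenvalue `((n+1)π)²` of `-d²/dx²` belonging to `dirichletSine n`. -/
def dirichletEigenvalue (n : ℕ) : ℝ := ((n + 1 : ℕ) * π) ^ 2

lemma dirichletEigenvalue_pos (n : ℕ) : 0 < dirichletEigenvalue n := by
  unfold dirichletEigenvalue
  positivity

@[fun_prop]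
lemma continuous_dirichletSine (n : ℕ) : Continuous (dirichletSine n) := by
  unfold dirichletSine
  fun_prop

lemma abs_dirichletSine_le (n : ℕ) (x : ℝ) : |dirichletSine n x| ≤ √2 := by
  rw [dirichletSine, abs_mul, abs_of_nonneg (Real.sqrt_nonneg 2)]
  exact mul_le_of_le_one_right (Real.sqrt_nonneg 2) (Real.abs_sin_le_one _)

lemma memLp_dirichletSine (n : ℕ) : MemLp (dirichletSine n) 2 μ01 :=
  memLp_μ01_of_continuousOn (continuous_dirichletSine n).continuousOn

/-- `dirichletSine n` as an element of `L²(0,1)`. -/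
def dirichletSineLp (n : ℕ) : Hsp := (memLp_dirichletSine n).toLp

lemma inner_dirichletSineLp (n : ℕ) (v : Hsp) :
    ⟪dirichletSineLp n, v⟫_ℝ = ∫ x, dirichletSine n x * v x ∂μ01 :=
  inner_toLp_eq_integral_mul _ v

lemma integral_cos_int_mul_pi {k : ℤ} (hk : k ≠ 0) :
    ∫ x in (0 : ℝ)..1, Real.cos (k * (π * x)) = 0 := by
  have hkπ : (k : ℝ) * π ≠ 0 := mul_ne_zero (by exact_mod_cast hk) Real.pi_ne_zero
  simp_rw [← mul_assoc]
  rw [intervalIntegral.integral_comp_mul_left (fun y => Real.cos y) hkπ]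
  simp

lemma dirichletSine_mul_dirichletSine (i j : ℕ) (x : ℝ) :
    dirichletSine i x * dirichletSine j x =
      Real.cos (((i : ℤ) - j : ℤ) * (π * x)) - Real.cos (((i : ℤ) + j + 2 : ℤ) * (π * x)) := by
  have hdiff : (((i : ℤ) - j : ℤ) : ℝ) * (π * x) =
      (i + 1 : ℕ) * (π * x) - (j + 1 : ℕ) * (π * x) := by push_cast; ring
  have hsum : (((i : ℤ) + j + 2 : ℤ) : ℝ) * (π * x) =
      (i + 1 : ℕ) * (π * x) + (j + 1 : ℕ) * (π * x) := by push_cast; ring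
  rw [hdiff, hsum, Real.cos_sub, Real.cos_add, dirichletSine, dirichletSine]
  linear_combination Real.sin ((i + 1 : ℕ) * (π * x)) * Real.sin ((j + 1 : ℕ) * (π * x)) *
    Real.mul_self_sqrt (zero_le_two (α := ℝ))

lemma orthonormal_dirichletSineLp : Orthonormal ℝ dirichletSineLp := by
  refine orthonormal_iff_ite.2 fun i j => ?_
  have hcos : ⟪dirichletSineLp i, dirichletSineLp j⟫_ℝ =
      (∫ x in (0 : ℝ)..1, Real.cos (((i : ℤ) - j : ℤ) * (π * x))) -
        ∫ x in (0 : ℝ)..1, Real.cos (((i : ℤ) + j + 2 : ℤ) * (π * x)) := by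
    have hj : ⇑(dirichletSineLp j) =ᵐ[μ01] dirichletSine j := (memLp_dirichletSine j).coeFn_toLp
    rw [inner_dirichletSineLp, integral_congr_ae (hj.mono fun x hx => by simp only [hx]; rfl),
      integral_μ01]
    simp only [dirichletSine_mul_dirichletSine]
    exact intervalIntegral.integral_sub (Continuous.intervalIntegrable (by fun_prop) _ _)
      (Continuous.intervalIntegrable (by fun_prop) _ _)
  rw [hcos, integral_cos_int_mul_pi (k := (i : ℤ) + j + 2) (by lia), sub_zero]
  split_ifs with hij
  · simp [hij]
  · exact integral_cos_int_mul_pi (by lia)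

/-- The odd extension to `(-1,1)` of the restriction of `f` to `(0,1)`, and zero elsewhere. -/
def oddExtension (f : ℝ → ℝ) (x : ℝ) : ℝ :=
  (Ioo (0 : ℝ) 1).indicator f x - (Ioo (0 : ℝ) 1).indicator f (-x)

lemma oddExtension_of_mem_Ioo (f : ℝ → ℝ) {x : ℝ} (hx : x ∈ Ioo (0 : ℝ) 1) :
    oddExtension f x = f x := by
  have hneg : -x ∉ Ioo (0 : ℝ) 1 := fun h => by linarith [h.1, hx.1]
  rw [oddExtension, indicator_of_mem hx, indicator_of_notMem hneg, sub_zero]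

lemma memLp_oddExtension (v : Hsp) : MemLp (oddExtension v) 2 volume := by
  have hv : MemLp ((Ioo (0 : ℝ) 1).indicator v) 2 volume :=
    (memLp_indicator_iff_restrict measurableSet_Ioo).2 (Lp.memLp v)
  exact hv.sub (hv.comp_measurePreserving (Measure.measurePreserving_neg volume))

lemma integral_mul_oddExtension (v : Hsp) {F : ℝ → ℂ} (hF : Continuous F) :
    ∫ x in (-1 : ℝ)..1, F x * oddExtension v x = ∫ x, (F x - F (-x)) * v x ∂μ01 := by
  set φ : ℝ → ℂ := (Ioo (0 : ℝ) 1).indicator (fun x => (v x : ℂ)) with hφ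
  have hsub : Ioo (0 : ℝ) 1 ⊆ Ioc (-1) 1 := fun x hx => ⟨by linarith [hx.1], hx.2.le⟩
  have hv : IntegrableOn (fun x => (v x : ℂ)) (Ioo 0 1) := (integrable_coeFn_μ01 v).ofReal
  have hφ_int : Integrable φ := (integrable_indicator_iff measurableSet_Ioo).2 hv
  have hmul {ψ : ℝ → ℂ} (hψ : Integrable ψ) {K : ℝ → ℂ} (hK : Continuous K) :
      IntervalIntegrable (fun x => K x * ψ x) volume (-1) 1 :=
    hψ.intervalIntegrable.continuousOn_mul hK.continuousOn
  have hFneg : Continuous fun x => F (-x) := hF.comp continuous_neg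
  have hodd : ∀ x, F x * oddExtension v x = F x * φ x - F x * φ (-x) := fun x => by
    simp only [oddExtension, hφ, indicator]
    split_ifs <;> simp [mul_sub]
  have hreflect : ∫ x in (-1 : ℝ)..1, F x * φ (-x) = ∫ x in (-1 : ℝ)..1, F (-x) * φ x := by
    simpa using (intervalIntegral.integral_comp_neg (a := -1) (b := 1) fun x => F (-x) * φ x)
  simp_rw [hodd]
  rw [intervalIntegral.integral_sub (hmul hφ_int hF) (hmul hφ_int.comp_neg hF), hreflect,
    ← intervalIntegral.integral_sub (hmul hφ_int hF) (hmul hφ_int hFneg)]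
  simp_rw [← sub_mul]
  have hindicator : ∫ x, (F x - F (-x)) * v x ∂μ01 =
      ∫ x in Ioc (-1) 1, (Ioo 0 1).indicator (fun x => (F x - F (-x)) * v x) x := by
    rw [setIntegral_indicator measurableSet_Ioo, inter_eq_right.2 hsub]
    rfl
  rw [intervalIntegral.integral_of_le (by norm_num), hindicator]
  refine integral_congr_ae (.of_forall fun x => ?_)
  exact (indicator_mul_right _ (fun x => F x - F (-x)) _).symm

lemma integral_sin_int_mul_eq_zero {v : Hsp} (hv : ∀ n, ⟪dirichletSineLp n, v⟫_ℝ = 0) (n : ℤ) :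
    ∫ x, Real.sin (n * (π * x)) * v x ∂μ01 = 0 := by
  have hnat : ∀ k : ℕ, ∫ x, Real.sin (k * (π * x)) * v x ∂μ01 = 0
    | 0 => by simp
    | k + 1 => by
      have hk := hv k
      simp only [inner_dirichletSineLp, dirichletSine, mul_assoc, integral_const_mul] at hk
      exact (mul_eq_zero.1 hk).resolve_left (by positivity)
  obtain ⟨k, rfl | rfl⟩ := n.eq_nat_or_neg
  · exact_mod_cast hnat k
  · simpa [integral_neg] using hnat k

lemma fourier_sub_fourier_neg (n : ℤ) (x : ℝ) :
    fourier n (x : AddCircle ((1 : ℝ) - -1)) - fourier n ((-x : ℝ) : AddCircle ((1 : ℝ) - -1)) =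
      2 * Complex.I * (Real.sin (n * (π * x)) : ℝ) := by
  have hpos : 2 * (π : ℂ) * Complex.I * n * x / ((1 - -1 : ℝ) : ℂ) =
      (n * (π * x) : ℝ) * Complex.I := by push_cast; ring
  have hneg : 2 * (π : ℂ) * Complex.I * n * (-x : ℝ) / ((1 - -1 : ℝ) : ℂ) =
      -(n * (π * x) : ℝ) * Complex.I := by push_cast; ring
  rw [fourier_coe_apply, fourier_coe_apply, hpos, hneg, Complex.exp_mul_I, Complex.exp_mul_I,
    Complex.cos_neg, Complex.sin_neg, Complex.ofReal_sin]
  ring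

lemma fourierCoeffOn_oddExtension_eq_zero {v : Hsp} (hv : ∀ n, ⟪dirichletSineLp n, v⟫_ℝ = 0)
    (n : ℤ) :
    fourierCoeffOn (by norm_num : (-1 : ℝ) < 1) (fun x => (oddExtension v x : ℂ)) n = 0 := by
  have hF : Continuous fun x : ℝ => fourier (-n) (x : AddCircle ((1 : ℝ) - -1)) :=
    (map_continuous (fourier (-n))).comp (AddCircle.continuous_mk' _)
  have hsin : ∫ x, (2 * Complex.I * (Real.sin ((-n : ℤ) * (π * x)) : ℝ)) * (v x : ℂ) ∂μ01 = 0 := by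
    simp_rw [mul_assoc, integral_const_mul, ← Complex.ofReal_mul]
    rw [integral_complex_ofReal, integral_sin_int_mul_eq_zero hv]
    simp
  rw [fourierCoeffOn_eq_integral]
  simp_rw [smul_eq_mul]
  rw [integral_mul_oddExtension v hF]
  simp_rw [fourier_sub_fourier_neg]
  rw [hsin, smul_zero]

lemma eq_zero_of_inner_dirichletSineLp {v : Hsp} (hv : ∀ n, ⟪dirichletSineLp n, v⟫_ℝ = 0) :
    v = 0 := by
  have hmem : MemLp (fun x => (oddExtension v x : ℂ)) 2 volume := (memLp_oddExtension v).ofReal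
  have hparseval := hasSum_sq_fourierCoeffOn (by norm_num : (-1 : ℝ) < 1)
    (hmem.restrict (Ioc (-1) 1))
  simp only [fourierCoeffOn_oddExtension_eq_zero hv, norm_zero, ne_eq, OfNat.ofNat_ne_zero,
    not_false_eq_true, zero_pow] at hparseval
  have hInt : ∫ x in Ioc (-1 : ℝ) 1, ‖(oddExtension v x : ℂ)‖ ^ 2 = 0 := by
    rw [← intervalIntegral.integral_of_le (by norm_num)]
    simpa using hparseval.unique hasSum_zero
  rw [setIntegral_eq_zero_iff_of_nonneg_ae (Eventually.of_forall fun x => by positivity)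
    ((memLp_two_iff_integrable_sq_norm hmem.1).1 hmem).integrableOn] at hInt
  have hsub : Ioo (0 : ℝ) 1 ⊆ Ioc (-1) 1 := fun x hx => ⟨by linarith [hx.1], hx.2.le⟩
  refine Lp.ext ?_
  filter_upwards [ae_restrict_of_ae_restrict_of_subset hsub hInt, ae_mem_Ioo_μ01,
    Lp.coeFn_zero ℝ 2 μ01] with x hx hx01 hzero
  rw [hzero, ← oddExtension_of_mem_Ioo v hx01]
  simpa using hx

/-- The Hilbert basis of `L²(0,1)` formed by the Dirichlet eigenfunctions. -/
def dirichletBasis : HilbertBasis ℕ ℝ Hsp :=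
  HilbertBasis.mkOfOrthogonalEqBot orthonormal_dirichletSineLp <|
    (Submodule.eq_bot_iff _).2 fun _ hv => eq_zero_of_inner_dirichletSineLp fun n =>
      (Submodule.mem_orthogonal _ _).1 hv _ (Submodule.subset_span ⟨n, rfl⟩)

lemma dirichletBasis_apply (n : ℕ) : dirichletBasis n = dirichletSineLp n := by
  rw [dirichletBasis, HilbertBasis.coe_mkOfOrthogonalEqBot]

lemma ext_inner_dirichletSineLp {v w : Hsp}
    (h : ∀ n, ⟪dirichletSineLp n, v⟫_ℝ = ⟪dirichletSineLp n, w⟫_ℝ) : v = w :=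
  sub_eq_zero.1 <| eq_zero_of_inner_dirichletSineLp fun n => by rw [inner_sub_right, h, sub_self]

lemma abs_inner_dirichletSineLp_le (n : ℕ) (v : Hsp) : |⟪dirichletSineLp n, v⟫_ℝ| ≤ ‖v‖ := by
  simpa [orthonormal_dirichletSineLp.1 n] using abs_real_inner_le_norm (dirichletSineLp n) v

/-! ### Rapidly convergent sine series -/

lemma norm_complex_sin_le (z : ℂ) : ‖Complex.sin z‖ ≤ Real.exp |z.im| := by
  have hneg : ‖Complex.exp (-z * Complex.I)‖ ≤ Real.exp |z.im| := by
    simpa [Complex.norm_exp] using le_abs_self z.im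
  have hpos : ‖Complex.exp (z * Complex.I)‖ ≤ Real.exp |z.im| := by
    simpa [Complex.norm_exp] using neg_le_abs z.im
  calc ‖Complex.sin z‖
      = ‖Complex.exp (-z * Complex.I) - Complex.exp (z * Complex.I)‖ / 2 := by simp [Complex.sin]
    _ ≤ (Real.exp |z.im| + Real.exp |z.im|) / 2 := by
        gcongr
        exact (norm_sub_le _ _).trans (add_le_add hneg hpos)
    _ = Real.exp |z.im| := by ring

lemma summable_exp_neg_mul_dirichletEigenvalue_add_mul {τ : ℝ} (hτ : 0 < τ) (R : ℝ) :
    Summable fun n : ℕ => Real.exp (-(τ * dirichletEigenvalue n) + R * (n + 1 : ℕ)) := by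
  have h := summable_pow_mul_jacobiTheta₂_term_bound (R / (2 * π)) (T := τ * π) (by positivity) 0
  refine (h.comp_injective ((Nat.cast_injective (R := ℤ)).comp (add_left_injective 1))).congr
    fun n => ?_
  simp only [Function.comp_apply, pow_zero, one_mul, Int.cast_natCast, Nat.abs_cast,
    dirichletEigenvalue]
  congr 1
  field_simp
  ring

lemma summable_exp_neg_mul_dirichletEigenvalue {τ : ℝ} (hτ : 0 < τ) :
    Summable fun n => Real.exp (-(τ * dirichletEigenvalue n)) := by
  simpa using summable_exp_neg_mul_dirichletEigenvalue_add_mul hτ 0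

section RapidDecay

variable {a : ℕ → ℝ} {C τ : ℝ}

lemma summable_of_abs_le_exp_neg_mul_dirichletEigenvalue (hτ : 0 < τ)
    (ha : ∀ n, |a n| ≤ C * Real.exp (-(τ * dirichletEigenvalue n))) : Summable a :=
  .of_norm_bounded ((summable_exp_neg_mul_dirichletEigenvalue hτ).mul_left C) ha

lemma differentiable_tsum_mul_complex_sin (hτ : 0 < τ)
    (ha : ∀ n, |a n| ≤ C * Real.exp (-(τ * dirichletEigenvalue n))) :
    Differentiable ℂ fun z : ℂ => ∑' n : ℕ, (a n : ℂ) * Complex.sin ((n + 1 : ℕ) * (π * z)) := by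
  intro z
  set R : ℝ := |z.im| + 1
  have hstrip : IsOpen {w : ℂ | |w.im| < R} := isOpen_lt (by fun_prop) continuous_const
  have hz : z ∈ {w : ℂ | |w.im| < R} := lt_add_one |z.im|
  refine (Complex.differentiableOn_tsum_of_summable_norm
    ((summable_exp_neg_mul_dirichletEigenvalue_add_mul hτ (π * R)).mul_left C)
    (fun n => by fun_prop) hstrip fun n w hw => ?_).differentiableAt (hstrip.mem_nhds hz)
  have him : |((n + 1 : ℕ) * (π * w) : ℂ).im| ≤ π * R * (n + 1 : ℕ) := by
    have : ((n + 1 : ℕ) * (π * w) : ℂ).im = π * w.im * (n + 1 : ℕ) := by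
      simp [Complex.mul_im, mul_comm]
    rw [this, abs_mul, abs_mul, abs_of_pos Real.pi_pos, Nat.abs_cast]
    gcongr
    exact hw.le
  calc ‖(a n : ℂ) * Complex.sin ((n + 1 : ℕ) * (π * w))‖
      = |a n| * ‖Complex.sin ((n + 1 : ℕ) * (π * w))‖ := by rw [norm_mul, Complex.norm_real]; rfl
    _ ≤ C * Real.exp (-(τ * dirichletEigenvalue n)) * Real.exp (π * R * (n + 1 : ℕ)) :=
        mul_le_mul (ha n) ((norm_complex_sin_le _).trans (Real.exp_le_exp.2 him)) (norm_nonneg _)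
          ((abs_nonneg _).trans (ha n))
    _ = C * Real.exp (-(τ * dirichletEigenvalue n) + π * R * (n + 1 : ℕ)) := by
        rw [mul_assoc, ← Real.exp_add]

lemma analyticOnNhd_re_comp_ofReal {f : ℂ → ℂ} (hf : Differentiable ℂ f) :
    AnalyticOnNhd ℝ (fun x : ℝ => (f x).re) univ := fun x _ =>
  (Complex.reCLM.analyticAt _).comp
    (((hf.analyticAt _).restrictScalars (𝕜 := ℝ)).comp (Complex.ofRealCLM.analyticAt x))

lemma analyticOnNhd_tsum_mul_dirichletSine (hτ : 0 < τ)
    (ha : ∀ n, |a n| ≤ C * Real.exp (-(τ * dirichletEigenvalue n))) :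
    AnalyticOnNhd ℝ (fun x => ∑' n, a n * dirichletSine n x) univ := by
  have hre : (fun x => ∑' n, a n * dirichletSine n x) = fun x : ℝ => √2 *
      (∑' n : ℕ, (a n : ℂ) * Complex.sin ((n + 1 : ℕ) * (π * x)) : ℂ).re := by
    ext x
    have hcast : (∑' n : ℕ, (a n : ℂ) * Complex.sin ((n + 1 : ℕ) * (π * x)) : ℂ) =
        (∑' n : ℕ, a n * Real.sin ((n + 1 : ℕ) * (π * x)) : ℝ) := by push_cast; rfl
    rw [hcast, Complex.ofReal_re, ← tsum_mul_left]
    exact tsum_congr fun n => by rw [dirichletSine]; ring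
  rw [hre]
  exact analyticOnNhd_const.mul
    (analyticOnNhd_re_comp_ofReal (differentiable_tsum_mul_complex_sin hτ ha))

lemma tsum_mul_dirichletSine_ae_eq (ha : Summable a) {v : Hsp}
    (hv : ∀ n, ⟪dirichletSineLp n, v⟫_ℝ = a n) :
    (fun x => ∑' n, a n * dirichletSine n x) =ᵐ[μ01] v := by
  let e (n : ℕ) : BoundedContinuousFunction ℝ ℝ :=
    .ofNormedAddCommGroup (dirichletSine n) (continuous_dirichletSine n) √2 (abs_dirichletSine_le n)
  have he (n : ℕ) : BoundedContinuousFunction.toLp 2 μ01 ℝ (e n) = dirichletSineLp n :=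
    Lp.ext ((BoundedContinuousFunction.coeFn_toLp 2 μ01 ℝ (e n)).trans
      (memLp_dirichletSine n).coeFn_toLp.symm)
  have hsum : Summable fun n => a n • e n :=
    .of_norm_bounded (ha.abs.mul_right √2) fun n => by
      rw [norm_smul]
      exact mul_le_mul_of_nonneg_left (BoundedContinuousFunction.norm_ofNormedAddCommGroup_le _
        (Real.sqrt_nonneg 2) (abs_dirichletSine_le n)) (norm_nonneg _)
  have htoLp : BoundedContinuousFunction.toLp 2 μ01 ℝ (∑' n, a n • e n) = v := by
    have hv' := dirichletBasis.hasSum_repr v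
    simp only [HilbertBasis.repr_apply_apply, dirichletBasis_apply, hv] at hv'
    refine (hsum.hasSum.mapL (BoundedContinuousFunction.toLp 2 μ01 ℝ)).unique ?_
    simpa only [map_smul, he] using hv'
  have heval (x : ℝ) : (∑' n, a n • e n) x = ∑' n, a n * dirichletSine n x :=
    ((BoundedContinuousFunction.evalCLM ℝ x).map_tsum hsum).trans <| tsum_congr fun n => rfl
  filter_upwards [BoundedContinuousFunction.coeFn_toLp 2 μ01 ℝ (∑' n, a n • e n)] with x hx
  rw [← heval, ← hx, htoLp]

end RapidDecay

lemma exists_analyticOnNhd_ae_eq_of_exp_decay {v : Hsp} {C τ : ℝ} (hτ : 0 < τ)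
    (hv : ∀ n, |⟪dirichletSineLp n, v⟫_ℝ| ≤ C * Real.exp (-(τ * dirichletEigenvalue n))) :
    ∃ f : ℝ → ℝ, AnalyticOnNhd ℝ f univ ∧ f =ᵐ[μ01] v :=
  ⟨_, analyticOnNhd_tsum_mul_dirichletSine hτ hv, tsum_mul_dirichletSine_ae_eq
    (summable_of_abs_le_exp_neg_mul_dirichletEigenvalue hτ hv) fun _ => rfl⟩

lemma ae_ne_zero_of_analyticOnNhd {f : ℝ → ℝ} (hf : AnalyticOnNhd ℝ f univ) {x : ℝ} (hx : f x ≠ 0) :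
    ∀ᵐ y, f y ≠ 0 := by
  have h := ae_restrict_le_codiscreteWithin (μ := volume) MeasurableSet.univ
    (hf.preimage_zero_mem_codiscrete hx)
  rwa [Measure.restrict_univ] at h

/-! ### The Dirichlet Laplacian -/

lemma absolutelyContinuousOnInterval_of_dist_le {X Y : Type*} [PseudoMetricSpace X]
    [PseudoMetricSpace Y] {f : ℝ → X} {g : ℝ → Y} {a b : ℝ}
    (hg : AbsolutelyContinuousOnInterval g a b)
    (hfg : ∀ x ∈ uIcc a b, ∀ y ∈ uIcc a b, dist (f x) (f y) ≤ dist (g x) (g y)) :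
    AbsolutelyContinuousOnInterval f a b := by
  rw [absolutelyContinuousOnInterval_iff] at hg ⊢
  refine fun ε hε => (hg ε hε).imp fun δ h => ⟨h.1, fun E hE hlen => ?_⟩
  exact (Finset.sum_le_sum fun i hi => hfg _ (hE.1 i hi).1 _ (hE.1 i hi).2).trans_lt
    (h.2 E hE hlen)

/-- `V` is a `C¹` representative of `v` satisfying the Dirichlet conditions, and its derivative `G`
is absolutely continuous with derivative `w`. This is the integration-friendly form of
`InDomainA v w`; `V` and `G` are defined on all of `ℝ` to avoid one-sided derivatives. -/
structure IsDirichletRepresentative (v w : Hsp) (V G : ℝ → ℝ) : Prop where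
  hasDerivAt : ∀ x, HasDerivAt V (G x) x
  continuous_deriv : Continuous G
  absolutelyContinuous_deriv : AbsolutelyContinuousOnInterval G 0 1
  ae_hasDerivAt_deriv : ∀ᵐ x ∂μ01, HasDerivAt G (w x) x
  left_eq_zero : V 0 = 0
  right_eq_zero : V 1 = 0
  ae_eq : V =ᵐ[μ01] v

namespace IsDirichletRepresentative

variable {v w : Hsp} {V G p : ℝ → ℝ}

protected lemma continuous (h : IsDirichletRepresentative v w V G) : Continuous V :=
  continuous_iff_continuousAt.2 fun x => (h.hasDerivAt x).continuousAt

lemma contDiff_one (h : IsDirichletRepresentative v w V G) : ContDiff ℝ 1 V := by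
  have hderiv : deriv V = G := funext fun x => (h.hasDerivAt x).deriv
  exact contDiff_one_iff_deriv.2
    ⟨fun x => (h.hasDerivAt x).differentiableAt, hderiv ▸ h.continuous_deriv⟩

lemma ae_deriv_deriv_eq (h : IsDirichletRepresentative v w V G) : deriv G =ᵐ[μ01] w :=
  h.ae_hasDerivAt_deriv.mono fun _ hx => hx.deriv

lemma integral_mul_eq_neg (h : IsDirichletRepresentative v w V G)
    (hp : AbsolutelyContinuousOnInterval p 0 1) (hp0 : p 0 = 0) (hp1 : p 1 = 0) :
    ∫ x, p x * w x ∂μ01 = -∫ x in (0 : ℝ)..1, deriv p x * G x := by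
  have hibp := hp.integral_mul_deriv_eq_deriv_mul h.absolutelyContinuous_deriv
  rw [hp0, hp1, zero_mul, zero_mul, sub_self, zero_sub] at hibp
  rw [← hibp, ← integral_μ01]
  exact integral_congr_ae (h.ae_deriv_deriv_eq.mono fun x hx => congrArg (p x * ·) hx.symm)

protected lemma inDomainA (h : IsDirichletRepresentative v w V G) : InDomainA v w := by
  refine ⟨V, h.continuous.continuousOn, h.left_eq_zero, h.right_eq_zero, h.ae_eq, G,
    fun x _ => h.hasDerivAt x, fun x hx y hy => ?_⟩
  have hsub : uIcc y x ⊆ Ioo 0 1 := ordConnected_Ioo.uIcc_subset hy hx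
  have hsub' : uIcc y x ⊆ uIcc 0 1 :=
    hsub.trans (Ioo_subset_Icc_self.trans_eq (uIcc_of_le zero_le_one).symm)
  rw [← (h.absolutelyContinuous_deriv.mono hsub').integral_deriv_eq_sub]
  refine intervalIntegral.integral_congr_ae_restrict ?_
  exact ae_restrict_of_ae_restrict_of_subset (uIoc_subset_uIcc.trans hsub) h.ae_deriv_deriv_eq

end IsDirichletRepresentative

/-- The antiderivative of `w` vanishing at `0`. Extending `w` by zero makes it continuous on `ℝ`. -/
def primitive (w : Hsp) (x : ℝ) : ℝ := ∫ z in (0 : ℝ)..x, (Ioo (0 : ℝ) 1).indicator w z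

lemma intervalIntegrable_indicator (w : Hsp) (a b : ℝ) :
    IntervalIntegrable ((Ioo (0 : ℝ) 1).indicator w) volume a b :=
  ((integrable_indicator_iff measurableSet_Ioo).2 (integrable_coeFn_μ01 w)).intervalIntegrable

lemma continuous_primitive (w : Hsp) : Continuous (primitive w) :=
  intervalIntegral.continuous_primitive (intervalIntegrable_indicator w) 0

lemma primitive_sub_primitive (w : Hsp) {x y : ℝ} (hx : x ∈ Ioo (0 : ℝ) 1)
    (hy : y ∈ Ioo (0 : ℝ) 1) : primitive w x - primitive w y = ∫ z in y..x, w z := by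
  rw [primitive, primitive, intervalIntegral.integral_interval_sub_left
    (intervalIntegrable_indicator w _ _) (intervalIntegrable_indicator w _ _)]
  exact intervalIntegral.integral_congr fun z hz =>
    indicator_of_mem (ordConnected_Ioo.uIcc_subset hy hx hz) _

lemma ae_hasDerivAt_primitive (w : Hsp) : ∀ᵐ x ∂μ01, HasDerivAt (primitive w) (w x) x := by
  filter_upwards [ae_mem_Ioo_μ01,
    ae_restrict_of_ae (intervalIntegrable_indicator w 0 1).ae_hasDerivAt_integral] with x hx hderiv
  rw [uIcc_of_le zero_le_one, indicator_of_mem hx] at hderiv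
  exact hderiv (Ioo_subset_Icc_self hx) 0 (left_mem_Icc.2 zero_le_one)

lemma isDirichletRepresentative_of_primitive {v w : Hsp} {c : ℝ}
    (hc : ∫ x in (0 : ℝ)..1, (c + primitive w x) = 0)
    (hv : ∀ᵐ x ∂μ01, ∫ z in (0 : ℝ)..x, (c + primitive w z) = v x) :
    IsDirichletRepresentative v w (fun x => ∫ z in (0 : ℝ)..x, (c + primitive w z))
      (fun x => c + primitive w x) where
  hasDerivAt x := (continuous_const.add (continuous_primitive w)).integral_hasStrictDerivAt 0 x
    |>.hasDerivAt
  continuous_deriv := continuous_const.add (continuous_primitive w)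
  absolutelyContinuous_deriv :=
    contDiff_const.contDiffOn.absolutelyContinuousOnInterval.fun_add
      ((intervalIntegrable_indicator w 0 1).absolutelyContinuousOnInterval_intervalIntegral
        left_mem_uIcc)
  ae_hasDerivAt_deriv := (ae_hasDerivAt_primitive w).mono fun _ h => h.const_add c
  left_eq_zero := intervalIntegral.integral_same
  right_eq_zero := hc
  ae_eq := hv

lemma InDomainA.exists_representative {v w : Hsp} (h : InDomainA v w) :
    ∃ V G, IsDirichletRepresentative v w V G := by
  obtain ⟨V, hcont, h0, h1, hv, g, hg, hgw⟩ := h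
  set c := g (1 / 2) - primitive w (1 / 2)
  have hmid : (1 / 2 : ℝ) ∈ Ioo (0 : ℝ) 1 := by norm_num
  have hgc : ∀ x ∈ Ioo (0 : ℝ) 1, g x = c + primitive w x := fun x hx => by
    linarith [hgw x hx _ hmid, primitive_sub_primitive w hx hmid]
  have hcont' : Continuous fun x => c + primitive w x :=
    continuous_const.add (continuous_primitive w)
  have hV : ∀ x ∈ Icc (0 : ℝ) 1, ∫ z in (0 : ℝ)..x, (c + primitive w z) = V x := fun x hx => by
    rw [intervalIntegral.integral_eq_sub_of_hasDerivAt_of_le hx.1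
      (hcont.mono (Icc_subset_Icc_right hx.2)) (fun y hy => ?_)
      (hcont'.intervalIntegrable _ _), h0, sub_zero]
    have hy' : y ∈ Ioo (0 : ℝ) 1 := ⟨hy.1, hy.2.trans_le hx.2⟩
    exact hgc y hy' ▸ hg y hy'
  refine ⟨_, _, isDirichletRepresentative_of_primitive (c := c)
    ((hV 1 (right_mem_Icc.2 zero_le_one)).trans h1) ?_⟩
  filter_upwards [hv, ae_mem_Ioo_μ01] with x hx hx01
  rw [hV x (Ioo_subset_Icc_self hx01), hx]

lemma exists_inDomainA (w : Hsp) : ∃ v, InDomainA v w := by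
  set c := -∫ x in (0 : ℝ)..1, primitive w x
  have hcont : Continuous fun x => c + primitive w x :=
    continuous_const.add (continuous_primitive w)
  have hc : ∫ x in (0 : ℝ)..1, (c + primitive w x) = 0 := by
    rw [intervalIntegral.integral_add (continuous_const.intervalIntegrable _ _)
      ((continuous_primitive w).intervalIntegrable _ _)]
    simp [c]
  have hV : Continuous fun x => ∫ z in (0 : ℝ)..x, (c + primitive w z) :=
    intervalIntegral.continuous_primitive (fun _ _ => hcont.intervalIntegrable _ _) 0
  have hmem := memLp_μ01_of_continuousOn hV.continuousOn
  exact ⟨hmem.toLp,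
    (isDirichletRepresentative_of_primitive hc
      (hmem.coeFn_toLp.mono fun _ hx => hx.symm)).inDomainA⟩

lemma hasDerivAt_dirichletSine (n : ℕ) (x : ℝ) : HasDerivAt (dirichletSine n)
    (√2 * ((n + 1 : ℕ) * π) * Real.cos ((n + 1 : ℕ) * (π * x))) x := by
  have h := ((((hasDerivAt_id x).const_mul π).const_mul ((n + 1 : ℕ) : ℝ)).sin).const_mul √2
  exact h.congr_deriv (by simp only [id, mul_one]; ring)

lemma hasDerivAt_deriv_dirichletSine (n : ℕ) (x : ℝ) :
    HasDerivAt (fun y => √2 * ((n + 1 : ℕ) * π) * Real.cos ((n + 1 : ℕ) * (π * y)))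
      (-(dirichletEigenvalue n * dirichletSine n x)) x := by
  have h := ((((hasDerivAt_id x).const_mul π).const_mul ((n + 1 : ℕ) : ℝ)).cos).const_mul
    (√2 * ((n + 1 : ℕ) * π))
  exact h.congr_deriv (by simp only [id, mul_one, dirichletEigenvalue, dirichletSine]; ring)

lemma InDomainA.inner_dirichletSineLp {v w : Hsp} (h : InDomainA v w) (n : ℕ) :
    ⟪dirichletSineLp n, w⟫_ℝ = -(dirichletEigenvalue n * ⟪dirichletSineLp n, v⟫_ℝ) := by
  obtain ⟨V, G, hV⟩ := h.exists_representative
  set e' : ℝ → ℝ := fun x => √2 * ((n + 1 : ℕ) * π) * Real.cos ((n + 1 : ℕ) * (π * x))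
  have hderiv : deriv (dirichletSine n) = e' := funext fun x => (hasDerivAt_dirichletSine n x).deriv
  have he' : Continuous e' := by fun_prop
  have hsmooth : ContDiff ℝ 1 (dirichletSine n) := contDiff_one_iff_deriv.2
    ⟨fun x => (hasDerivAt_dirichletSine n x).differentiableAt, hderiv ▸ he'⟩
  have hfirst : ∫ x, dirichletSine n x * w x ∂μ01 = -∫ x in (0 : ℝ)..1, e' x * G x := by
    rw [hV.integral_mul_eq_neg hsmooth.contDiffOn.absolutelyContinuousOnInterval
      (by simp [dirichletSine]) (by rw [dirichletSine, mul_one, Real.sin_nat_mul_pi, mul_zero]),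
      hderiv]
  have hsecond : ∫ x in (0 : ℝ)..1, e' x * G x =
      dirichletEigenvalue n * ∫ x, dirichletSine n x * v x ∂μ01 := by
    rw [intervalIntegral.integral_mul_deriv_eq_deriv_mul
      (fun x _ => hasDerivAt_deriv_dirichletSine n x) (fun x _ => hV.hasDerivAt x)
      (Continuous.intervalIntegrable (by fun_prop) _ _)
      (hV.continuous_deriv.intervalIntegrable _ _),
      hV.left_eq_zero, hV.right_eq_zero, ← integral_const_mul,
      integral_congr_ae (hV.ae_eq.mono fun x hx => by rw [← hx]), integral_μ01]
    simp [mul_assoc]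
  rw [_root_.inner_dirichletSineLp, _root_.inner_dirichletSineLp, hfirst, hsecond]

lemma inDomainA_iff {v w : Hsp} : InDomainA v w ↔
    ∀ n, ⟪dirichletSineLp n, w⟫_ℝ = -(dirichletEigenvalue n * ⟪dirichletSineLp n, v⟫_ℝ) := by
  refine ⟨fun h => h.inner_dirichletSineLp, fun h => ?_⟩
  obtain ⟨v', hv'⟩ := exists_inDomainA w
  suffices v = v' from this ▸ hv'
  refine ext_inner_dirichletSineLp fun n => mul_left_cancel₀ (dirichletEigenvalue_pos n).ne' ?_
  exact neg_injective ((h n).symm.trans (hv'.inner_dirichletSineLp n))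

lemma InDomainA.sub {v₁ w₁ v₂ w₂ : Hsp} (h₁ : InDomainA v₁ w₁) (h₂ : InDomainA v₂ w₂) :
    InDomainA (v₁ - v₂) (w₁ - w₂) :=
  inDomainA_iff.2 fun n => by
    rw [inner_sub_right, inner_sub_right, h₁.inner_dirichletSineLp, h₂.inner_dirichletSineLp]
    ring

lemma InDomainA.neg {v w : Hsp} (h : InDomainA v w) : InDomainA (-v) (-w) :=
  inDomainA_iff.2 fun n => by
    rw [inner_neg_right, inner_neg_right, h.inner_dirichletSineLp, mul_neg]

lemma mul_deriv_max_zero_nonneg {f : ℝ → ℝ} {f' x : ℝ} (hf : HasDerivAt f f' x) :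
    0 ≤ deriv (fun y => max (f y) 0) x * f' := by
  rcases lt_trichotomy (f x) 0 with hneg | hzero | hpos
  · have hmax : (fun y => max (f y) 0) =ᶠ[𝓝 x] fun _ => 0 := by
      filter_upwards [hf.continuousAt.eventually_lt_const hneg] with y hy using max_eq_right hy.le
    simp [hmax.deriv_eq]
  · have hmin : IsLocalMin (fun y => max (f y) 0) x :=
      .of_forall fun y => by simp [hzero]
    simp [hmin.deriv_eq_zero]
  · have hmax : (fun y => max (f y) 0) =ᶠ[𝓝 x] f := by
      filter_upwards [hf.continuousAt.eventually_const_lt hpos] with y hy using max_eq_left hy.le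
    rw [hmax.deriv_eq, hf.deriv]
    exact mul_self_nonneg f'

lemma InDomainA.inner_posPart_nonpos {v w : Hsp} (h : InDomainA v w) : ⟪v⁺, w⟫_ℝ ≤ 0 := by
  obtain ⟨V, G, hV⟩ := h.exists_representative
  have hp : AbsolutelyContinuousOnInterval (fun x => max (V x) 0) 0 1 :=
    absolutelyContinuousOnInterval_of_dist_le
      hV.contDiff_one.contDiffOn.absolutelyContinuousOnInterval fun x _ y _ => by
        simpa [Real.dist_eq] using abs_max_sub_max_le_abs (V x) (V y) 0
  have hinner : ⟪v⁺, w⟫_ℝ = ∫ x, max (V x) 0 * w x ∂μ01 := by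
    rw [inner_eq_integral_mul]
    refine integral_congr_ae ?_
    filter_upwards [Lp.coeFn_sup v 0, Lp.coeFn_zero ℝ 2 μ01, hV.ae_eq] with x hsup hzero hx
    rw [posPart_def, hsup, Pi.sup_apply, hzero, hx]
    rfl
  rw [hinner, hV.integral_mul_eq_neg hp (by simp [hV.left_eq_zero]) (by simp [hV.right_eq_zero]),
    neg_nonpos]
  exact intervalIntegral.integral_nonneg zero_le_one fun x _ =>
    mul_deriv_max_zero_nonneg (hV.hasDerivAt x)

/-! ### Derivatives on zero sets -/

lemma ae_eq_zero_of_ae_hasDerivAt {E : Type*} [NormedAddCommGroup E] [NormedSpace ℝ E]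
    {F f : ℝ → E} {S : Set ℝ} (hF : ∀ x ∈ S, F x = 0)
    (hf : ∀ᵐ x, x ∈ S → HasDerivAt F (f x) x) : ∀ᵐ x, x ∈ S → f x = 0 := by
  -- All but countably many points of `S` are right accumulation points of `S`.
  filter_upwards [hf, (countable_setOfPred_isolated_right_within (s := S)).ae_notMem volume]
    with x hderiv hx hxS
  have hne : (𝓝[S ∩ Ioi x] x).NeBot := ⟨fun hbot => hx ⟨hxS, hbot⟩⟩
  have hslope := (hasDerivAt_iff_tendsto_slope.1 (hderiv hxS)).mono_left
    (nhdsWithin_mono x fun y (hy : y ∈ S ∩ Ioi x) => hy.2.ne')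
  refine tendsto_nhds_unique hslope (tendsto_const_nhds.congr' ?_)
  filter_upwards [self_mem_nhdsWithin] with y hy
  rw [slope, hF y hy.1, hF x hxS, vsub_self, smul_zero]

lemma InDomainA.ae_eq_zero {v w : Hsp} (h : InDomainA v w) (hv : 0 ≤ v) :
    ∀ᵐ x ∂μ01, v x = 0 → w x = 0 := by
  obtain ⟨V, G, hV⟩ := h.exists_representative
  have hnonneg : ∀ x ∈ Ioo (0 : ℝ) 1, 0 ≤ V x := by
    have hae : (fun x => max (V x) 0) =ᵐ[volume.restrict (Ioo (0 : ℝ) 1)] V := by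
      filter_upwards [hV.ae_eq, (Lp.coeFn_nonneg v).2 hv] with x hx hvx
      exact max_eq_left (hx ▸ hvx)
    intro x hx
    rw [← Measure.eqOn_open_of_ae_eq hae isOpen_Ioo
      (hV.continuous.max continuous_const).continuousOn hV.continuous.continuousOn hx]
    exact le_max_right _ _
  have hG : ∀ x ∈ Ioo (0 : ℝ) 1 ∩ V ⁻¹' {0}, G x = 0 := fun x ⟨hx, hVx⟩ => by
    have hmin : IsLocalMin V x := by
      filter_upwards [isOpen_Ioo.mem_nhds hx] with y hy using hVx ▸ hnonneg y hy
    exact hmin.hasDerivAt_eq_zero (hV.hasDerivAt x)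
  have hderiv : ∀ᵐ x, x ∈ Ioo (0 : ℝ) 1 ∩ V ⁻¹' {0} → HasDerivAt G (w x) x :=
    ((ae_restrict_iff' measurableSet_Ioo).1 hV.ae_hasDerivAt_deriv).mono fun _ hx hxS => hx hxS.1
  filter_upwards [ae_mem_Ioo_μ01, hV.ae_eq,
    ae_restrict_of_ae (ae_eq_zero_of_ae_hasDerivAt hG hderiv)] with x hx hVx hwx hvx
  exact hwx ⟨hx, hVx.trans hvx⟩

lemma ae_deriv_eq_zero_of_nonneg {α : Type*} {m : MeasurableSpace α} {μ : Measure α}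
    [IsFiniteMeasure μ] {u : ℝ → Lp ℝ 2 μ} {d : Lp ℝ 2 μ} {t : ℝ} (hd : HasDerivAt u d t)
    (hu : ∀ᶠ σ in 𝓝 t, 0 ≤ u σ) : ∀ᵐ x ∂μ, u t x = 0 → d x = 0 := by
  have hS : MeasurableSet {x | u t x = 0} :=
    (Lp.stronglyMeasurable (u t)).measurable (measurableSet_singleton 0)
  refine (ae_restrict_iff' hS).1 ?_
  have hInt : IntegrableOn d {x | u t x = 0} μ := ((Lp.memLp d).integrable one_le_two).integrableOn
  refine hInt.ae_eq_zero_of_forall_setIntegral_eq_zero fun T hT _ => ?_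
  have hTS := hT.inter hS
  rw [Measure.restrict_restrict hT,
    ← L2.inner_indicatorConstLp_one (𝕜 := ℝ) hTS (measure_ne_top μ _)]
  have hmin : IsLocalMin
      (fun σ => ⟪indicatorConstLp 2 hTS (measure_ne_top μ _) (1 : ℝ), u σ⟫_ℝ) t := by
    filter_upwards [hu] with σ hσ
    rw [L2.inner_indicatorConstLp_one, L2.inner_indicatorConstLp_one,
      setIntegral_eq_zero_of_forall_eq_zero fun x hx => hx.2]
    exact integral_nonneg_of_ae (ae_restrict_of_ae ((Lp.coeFn_nonneg _).2 hσ))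
  exact hmin.hasDerivAt_eq_zero (((innerSL ℝ _).hasFDerivAt.comp_hasDerivAt t hd))

/-! ### Strong solutions -/

lemma eq_one_of_mem_heaviside {s h : ℝ} (hs : 0 < s) (hh : h ∈ heaviside s) : h = 1 := by
  simpa [heaviside, hs.le.not_gt, hs.ne'] using hh

lemma NonnegOn.nonneg {u : ℝ → Hsp} {τ t : ℝ} (hu : NonnegOn u τ) (ht : τ ≤ t) : 0 ≤ u t :=
  (Lp.coeFn_nonneg _).1 (hu t ht)

lemma ae_restrict_Ioo {p : ℝ → Prop} {τ s t : ℝ} (hs : τ ≤ s)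
    (h : ∀ᵐ σ ∂(volume.restrict (Ioi τ)), p σ) : ∀ᵐ σ ∂(volume.restrict (Ioo s t)), p σ :=
  ae_restrict_of_ae_restrict_of_subset (Ioo_subset_Ioi_self.trans (Ioi_subset_Ioi hs)) h

namespace IsStrongSolutionWith

variable {b ω : ℝ → ℝ} {τ s t : ℝ} {u r u' uxx : ℝ → Hsp}

lemma ae_hasDerivAt (h : IsStrongSolutionWith b ω τ u r u' uxx) (hs : τ < s) (hst : s < t) :
    ∀ᵐ σ ∂(volume.restrict (Ioo s t)), HasDerivAt u (r σ + uxx σ) σ := by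
  obtain ⟨hInt, hu⟩ := h.fund s t hs hst
  filter_upwards [ae_restrict_of_ae hInt.ae_hasDerivAt_integral, ae_restrict_Ioo hs.le h.eq,
    ae_restrict_mem measurableSet_Ioo] with σ hderiv heqσ hσ
  rw [← heqσ]
  refine ((hderiv (uIcc_of_le hst.le ▸ Ioo_subset_Icc_self hσ) s left_mem_uIcc).const_add
    (u s)).congr_of_eventuallyEq ?_
  filter_upwards [isOpen_Ioo.mem_nhds hσ] with y hy using hu y (Ioo_subset_Icc_self hy)

lemma absolutelyContinuousOnInterval (h : IsStrongSolutionWith b ω τ u r u' uxx) (hs : τ < s)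
    (hst : s < t) : AbsolutelyContinuousOnInterval u s t := by
  obtain ⟨hInt, hu⟩ := h.fund s t hs hst
  refine absolutelyContinuousOnInterval_of_dist_le
    (hInt.norm.absolutelyContinuousOnInterval_intervalIntegral left_mem_uIcc)
    fun x hx y hy => ?_
  have hsub : ∀ z ∈ uIcc s t, IntervalIntegrable u' volume s z := fun z hz =>
    hInt.mono_set (uIcc_subset_uIcc_left hz)
  rw [dist_eq_norm, dist_eq_norm, hu x (uIcc_of_le hst.le ▸ hx), hu y (uIcc_of_le hst.le ▸ hy),
    add_sub_add_left_eq_sub, intervalIntegral.integral_interval_sub_left (hsub x hx) (hsub y hy),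
    intervalIntegral.integral_interval_sub_left (hsub x hx).norm (hsub y hy).norm]
  exact intervalIntegral.norm_integral_le_abs_integral_norm

lemma ae_nonneg_selection (h : IsStrongSolutionWith b ω τ u r u' uxx) (hb : ∀ t, 0 ≤ b t)
    (hω : ∀ t, 0 ≤ ω t) (hu : NonnegOn u τ) (hs : τ < s) (hst : s < t) :
    ∀ᵐ σ ∂(volume.restrict (Ioo s t)), 0 ≤ r σ := by
  filter_upwards [h.ae_hasDerivAt hs hst, ae_restrict_Ioo hs.le h.sel, ae_restrict_Ioo hs.le h.dom,
    ae_restrict_mem measurableSet_Ioo] with σ hderiv hsel hdom hσ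
  have hτσ : τ < σ := hs.trans hσ.1
  have huσ : 0 ≤ u σ := hu.nonneg hτσ.le
  have hnear : ∀ᶠ y in 𝓝 σ, 0 ≤ u y := by
    filter_upwards [lt_mem_nhds hτσ] with y hy using hu.nonneg hy.le
  rw [← Lp.coeFn_nonneg]
  filter_upwards [hsel, ae_deriv_eq_zero_of_nonneg hderiv hnear, hdom.ae_eq_zero huσ,
    Lp.coeFn_add (r σ) (uxx σ), (Lp.coeFn_nonneg _).2 huσ]
    with x ⟨k, hk, hr⟩ hzero hxx hadd hnonneg
  rcases (show 0 ≤ u σ x from hnonneg).eq_or_lt' with hux | hux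
  · have hrx := hzero hux
    rw [hadd, Pi.add_apply, hxx hux, add_zero] at hrx
    exact hrx.ge
  · rw [hr, eq_one_of_mem_heaviside hux hk, mul_one]
    exact add_nonneg (hb σ) (mul_nonneg (hω σ) hnonneg)

end IsStrongSolutionWith

/-! ### The comparison principle -/

section PosPart

variable {α : Type*} {m : MeasurableSpace α} {μ : Measure α}

lemma inner_nonneg_of_nonneg {f g : Lp ℝ 2 μ} (hf : 0 ≤ f) (hg : 0 ≤ g) : 0 ≤ ⟪f, g⟫_ℝ := by
  rw [inner_eq_integral_mul]
  refine integral_nonneg_of_ae ?_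
  filter_upwards [(Lp.coeFn_nonneg f).2 hf, (Lp.coeFn_nonneg g).2 hg] with x hfx hgx
    using mul_nonneg hfx hgx

lemma norm_posPart_sq_le (f g : Lp ℝ 2 μ) :
    ‖g⁺‖ ^ 2 ≤ ‖f⁺‖ ^ 2 + 2 * ⟪f⁺, g - f⟫_ℝ + ‖g - f‖ ^ 2 := by
  have hle : g⁺ ≤ |f⁺ + (g - f)| := by
    refine sup_le_iff.2 ⟨le_trans ?_ (le_abs_self _), abs_nonneg _⟩
    calc g = f + (g - f) := (add_sub_cancel f g).symm
      _ ≤ f⁺ + (g - f) := add_le_add_left (le_posPart f) _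
  rw [← norm_add_sq_real]
  gcongr
  exact norm_le_norm_of_abs_le_abs (by rwa [abs_of_nonneg (posPart_nonneg g)])

lemma deriv_norm_posPart_sq {z : ℝ → Lp ℝ 2 μ} {d : Lp ℝ 2 μ} {t : ℝ} (hz : HasDerivAt z d t)
    (hdiff : DifferentiableAt ℝ (fun σ => ‖(z σ)⁺‖ ^ 2) t) :
    deriv (fun σ => ‖(z σ)⁺‖ ^ 2) t = 2 * ⟪(z t)⁺, d⟫_ℝ := by
  have hzt := hz.sub_const (z t)
  have hinner : HasDerivAt (fun σ => 2 * ⟪(z t)⁺, z σ - z t⟫_ℝ) (2 * ⟪(z t)⁺, d⟫_ℝ) t :=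
    ((innerSL ℝ (z t)⁺).hasFDerivAt.comp_hasDerivAt t hzt).const_mul 2
  have hmax : IsLocalMax
      (fun σ => ‖(z σ)⁺‖ ^ 2 - 2 * ⟪(z t)⁺, z σ - z t⟫_ℝ - ‖z σ - z t‖ ^ 2) t :=
    .of_forall fun σ => by
      have hσ := norm_posPart_sq_le (z t) (z σ)
      simp only [sub_self, inner_zero_right, norm_zero]
      linarith
  have hzero := hmax.hasDerivAt_eq_zero ((hdiff.hasDerivAt.sub hinner).sub hzt.norm_sq)
  rw [sub_self, inner_zero_left] at hzero
  linarith

end PosPart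

lemma absolutelyContinuousOnInterval_norm_posPart_sq {z : ℝ → Hsp} {s t : ℝ}
    (hz : AbsolutelyContinuousOnInterval z s t) :
    AbsolutelyContinuousOnInterval (fun σ => ‖(z σ)⁺‖ ^ 2) s t := by
  have hnorm : AbsolutelyContinuousOnInterval (fun σ => ‖(z σ)⁺‖) s t :=
    absolutelyContinuousOnInterval_of_dist_le hz fun x _ y _ =>
      ((lipschitzWith_one_norm.comp lipschitzWith_posPart).dist_le_mul (z x) (z y)).trans (by simp)
  simpa only [sq] using hnorm.fun_mul hnorm

/-- `‖z⁺‖²` is nonincreasing: its derivative `2⟪z⁺, z'⟫` is at most `2⟪z⁺, z_xx⟫ ≤ 0`. -/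
lemma nonpos_of_heat_subsolution {z : ℝ → Hsp} {s t : ℝ} (hst : s < t)
    (hcont : ContinuousOn z (Icc s t))
    (hac : ∀ s' ∈ Ioo s t, AbsolutelyContinuousOnInterval z s' t)
    (hsub : ∀ᵐ σ ∂(volume.restrict (Ioo s t)),
      ∃ d w, HasDerivAt z d σ ∧ InDomainA (z σ) w ∧ d ≤ w) (hzs : z s ≤ 0) : z t ≤ 0 := by
  have hdecr : ∀ s' ∈ Ioo s t, ‖(z t)⁺‖ ^ 2 ≤ ‖(z s')⁺‖ ^ 2 := fun s' hs' => by
    have hf := absolutelyContinuousOnInterval_norm_posPart_sq (hac s' hs')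
    rw [← sub_nonpos, ← hf.integral_deriv_eq_sub, intervalIntegral.integral_of_le hs'.2.le,
      integral_Ioc_eq_integral_Ioo]
    refine integral_nonpos_of_ae ?_
    filter_upwards [ae_restrict_of_ae hf.ae_differentiableAt,
      ae_restrict_of_ae_restrict_of_subset (Ioo_subset_Ioo_left hs'.1.le) hsub,
      ae_restrict_mem measurableSet_Ioo] with σ hdiff ⟨d, w, hd, hw, hdw⟩ hσ
    rw [deriv_norm_posPart_sq hd (hdiff (uIcc_of_le hs'.2.le ▸ Ioo_subset_Icc_self hσ))]
    have hnonneg := inner_nonneg_of_nonneg (posPart_nonneg (z σ)) (sub_nonneg.2 hdw)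
    rw [inner_sub_right] at hnonneg
    change 2 * ⟪(z σ)⁺, d⟫_ℝ ≤ 0
    linarith [hw.inner_posPart_nonpos]
  have hlim : Tendsto (fun σ => ‖(z σ)⁺‖ ^ 2) (𝓝[Ioo s t] s) (𝓝 0) := by
    have hz := ((hcont s (left_mem_Icc.2 hst.le)).mono Ioo_subset_Icc_self).tendsto
    simpa [posPart_eq_zero.2 hzs] using ((continuous_posPart.tendsto _).comp hz).norm.pow 2
  have : (𝓝[Ioo s t] s).NeBot := left_nhdsWithin_Ioo_neBot hst
  have hle : ‖(z t)⁺‖ ^ 2 ≤ 0 := ge_of_tendsto hlim (eventually_mem_nhdsWithin.mono hdecr)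
  exact posPart_eq_zero.1 (norm_eq_zero.1 (pow_eq_zero_iff two_ne_zero |>.1
    (hle.antisymm (sq_nonneg _))))

/-! ### The heat flow -/

lemma norm_smul_dirichletSineLp (a : ℝ) (n : ℕ) : ‖a • dirichletSineLp n‖ = |a| := by
  rw [norm_smul, orthonormal_dirichletSineLp.1 n, mul_one, Real.norm_eq_abs]

lemma inner_dirichletSineLp_of_hasSum {a : ℕ → ℝ} {v : Hsp}
    (h : HasSum (fun m => a m • dirichletSineLp m) v) (n : ℕ) : ⟪dirichletSineLp n, v⟫_ℝ = a n := by
  refine (h.mapL (innerSL ℝ (dirichletSineLp n))).unique ?_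
  convert! hasSum_ite_eq n (a n) using 2 with m
  simp only [innerSL_apply_apply, inner_smul_right,
    orthonormal_iff_ite.1 orthonormal_dirichletSineLp n m, mul_ite, mul_one, mul_zero,
    eq_comm (a := n)]
  split_ifs with h <;> simp [h]

lemma hasSum_sq_inner_dirichletSineLp (v : Hsp) :
    HasSum (fun n => ⟪dirichletSineLp n, v⟫_ℝ ^ 2) (‖v‖ ^ 2) := by
  rw [← real_inner_self_eq_norm_sq]
  convert! dirichletBasis.hasSum_inner_mul_inner v v using 2 with n
  rw [dirichletBasis_apply, real_inner_comm v, sq]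

lemma summable_dirichletEigenvalue_mul_exp_neg {τ : ℝ} (hτ : 0 < τ) :
    Summable fun n => dirichletEigenvalue n * Real.exp (-(τ * dirichletEigenvalue n)) := by
  refine .of_nonneg_of_le (fun n => mul_nonneg (dirichletEigenvalue_pos n).le (Real.exp_pos _).le)
    (fun n => ?_) ((summable_exp_neg_mul_dirichletEigenvalue (half_pos hτ)).mul_left (2 / τ))
  have hle : dirichletEigenvalue n ≤ 2 / τ * Real.exp (τ / 2 * dirichletEigenvalue n) := by
    rw [div_mul_eq_mul_div, le_div_iff₀ hτ]
    linarith [Real.add_one_le_exp (τ / 2 * dirichletEigenvalue n)]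
  calc dirichletEigenvalue n * Real.exp (-(τ * dirichletEigenvalue n))
      ≤ 2 / τ * Real.exp (τ / 2 * dirichletEigenvalue n) *
          Real.exp (-(τ * dirichletEigenvalue n)) := by gcongr
    _ = 2 / τ * Real.exp (-(τ / 2 * dirichletEigenvalue n)) := by
        rw [mul_assoc, ← Real.exp_add]
        ring_nf

/-- The solution at time `τ` of the Dirichlet heat equation with initial value `φ`. -/
def heatFlow (φ : Hsp) (τ : ℝ) : Hsp :=
  ∑' n, (Real.exp (-(τ * dirichletEigenvalue n)) * ⟪dirichletSineLp n, φ⟫_ℝ) • dirichletSineLp n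

/-- The common value, for `τ > 0`, of the time derivative and of the second space derivative of
`heatFlow φ τ`. -/
def heatFlowDeriv (φ : Hsp) (τ : ℝ) : Hsp :=
  ∑' n, (-(dirichletEigenvalue n * Real.exp (-(τ * dirichletEigenvalue n))) *
    ⟪dirichletSineLp n, φ⟫_ℝ) • dirichletSineLp n

section HeatFlow

variable {φ : Hsp} {τ τ₀ s T : ℝ}

lemma heatFlow_zero : heatFlow φ 0 = φ := by
  have h := (dirichletBasis.hasSum_repr φ).tsum_eq
  simpa [heatFlow, HilbertBasis.repr_apply_apply, dirichletBasis_apply] using h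

lemma hasSum_heatFlow (hτ : 0 < τ) : HasSum (fun n =>
    (Real.exp (-(τ * dirichletEigenvalue n)) * ⟪dirichletSineLp n, φ⟫_ℝ) • dirichletSineLp n)
    (heatFlow φ τ) := by
  refine (Summable.of_norm_bounded
    ((summable_exp_neg_mul_dirichletEigenvalue hτ).mul_right ‖φ‖) fun n => ?_).hasSum
  rw [norm_smul_dirichletSineLp, abs_mul, Real.abs_exp]
  gcongr
  exact abs_inner_dirichletSineLp_le n φ

lemma inner_dirichletSineLp_heatFlow (hτ : 0 ≤ τ) (n : ℕ) : ⟪dirichletSineLp n, heatFlow φ τ⟫_ℝ =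
    Real.exp (-(τ * dirichletEigenvalue n)) * ⟪dirichletSineLp n, φ⟫_ℝ := by
  rcases hτ.eq_or_lt with rfl | hτ
  · simp [heatFlow_zero]
  · exact inner_dirichletSineLp_of_hasSum (hasSum_heatFlow hτ) n

lemma continuousOn_heatFlow : ContinuousOn (heatFlow φ) (Ici 0) := by
  intro τ₀ hτ₀
  have hsum (τ : ℝ) (hτ : τ ∈ Ici (0 : ℝ)) : ∑' n, ((Real.exp (-(τ * dirichletEigenvalue n)) -
      Real.exp (-(τ₀ * dirichletEigenvalue n))) * ⟪dirichletSineLp n, φ⟫_ℝ) ^ 2 =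
        ‖heatFlow φ τ - heatFlow φ τ₀‖ ^ 2 := by
    rw [← (hasSum_sq_inner_dirichletSineLp _).tsum_eq]
    simp_rw [inner_sub_right, inner_dirichletSineLp_heatFlow hτ,
      inner_dirichletSineLp_heatFlow hτ₀, sub_mul]
  have hexp {τ : ℝ} (hτ : τ ∈ Ici (0 : ℝ)) (n : ℕ) :
      Real.exp (-(τ * dirichletEigenvalue n)) ∈ Icc (0 : ℝ) 1 :=
    ⟨(Real.exp_pos _).le, Real.exp_le_one_iff.2
      (neg_nonpos.2 (mul_nonneg hτ (dirichletEigenvalue_pos n).le))⟩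
  have hbound {τ : ℝ} (hτ : τ ∈ Ici (0 : ℝ)) (n : ℕ) :
      ‖((Real.exp (-(τ * dirichletEigenvalue n)) - Real.exp (-(τ₀ * dirichletEigenvalue n))) *
        ⟪dirichletSineLp n, φ⟫_ℝ) ^ 2‖ ≤ ⟪dirichletSineLp n, φ⟫_ℝ ^ 2 := by
    have habs := abs_sub_le_of_nonneg_of_le (hexp hτ n).1 (hexp hτ n).2
      (hexp hτ₀ n).1 (hexp hτ₀ n).2
    rw [Real.norm_eq_abs, abs_sq, mul_pow]
    exact mul_le_of_le_one_left (sq_nonneg _) ((sq_le_one_iff_abs_le_one _).2 habs)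
  have hlim := tendsto_tsum_of_dominated_convergence (𝓕 := 𝓝[Ici 0] τ₀) (g := fun _ => (0 : ℝ))
    (hasSum_sq_inner_dirichletSineLp φ).summable
    (fun n => (Continuous.tendsto' (by fun_prop) _ _ (by simp)).mono_left nhdsWithin_le_nhds)
    (eventually_mem_nhdsWithin.mono fun τ hτ => hbound hτ)
  rw [tsum_zero] at hlim
  have hsq := (hlim.congr' (eventually_mem_nhdsWithin.mono hsum)).sqrt
  simp only [Real.sqrt_zero, Real.sqrt_sq (norm_nonneg _)] at hsq
  exact tendsto_iff_norm_sub_tendsto_zero.2 hsq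

lemma norm_heatFlowDeriv_term_le (hτ : τ₀ ≤ τ) (n : ℕ) :
    ‖(-(dirichletEigenvalue n * Real.exp (-(τ * dirichletEigenvalue n))) *
      ⟪dirichletSineLp n, φ⟫_ℝ) • dirichletSineLp n‖ ≤
        dirichletEigenvalue n * Real.exp (-(τ₀ * dirichletEigenvalue n)) * ‖φ‖ := by
  have hpos := dirichletEigenvalue_pos n
  rw [norm_smul_dirichletSineLp, abs_mul, abs_neg, abs_mul, Real.abs_exp, abs_of_pos hpos]
  gcongr
  exact abs_inner_dirichletSineLp_le n φ

lemma hasDerivAt_heatFlow (hτ : 0 < τ) : HasDerivAt (heatFlow φ) (heatFlowDeriv φ τ) τ := by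
  refine hasDerivAt_tsum_of_isPreconnected
    ((summable_dirichletEigenvalue_mul_exp_neg (half_pos hτ)).mul_right ‖φ‖) isOpen_Ioi
    isPreconnected_Ioi (fun n σ _ => ?_)
    (fun n σ hσ => norm_heatFlowDeriv_term_le (mem_Ioi.1 hσ).le n)
    (mem_Ioi.2 (half_lt_self hτ)) (hasSum_heatFlow hτ).summable (mem_Ioi.2 (half_lt_self hτ))
  refine HasDerivAt.smul_const (HasDerivAt.mul_const ?_ _) _
  exact ((hasDerivAt_mul_const (dirichletEigenvalue n)).fun_neg.exp).congr_deriv (by ring)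

lemma inDomainA_heatFlow (hτ : 0 < τ) : InDomainA (heatFlow φ τ) (heatFlowDeriv φ τ) := by
  refine inDomainA_iff.2 fun n => ?_
  have hsum := Summable.of_norm_bounded
    ((summable_dirichletEigenvalue_mul_exp_neg hτ).mul_right ‖φ‖) fun n =>
      norm_heatFlowDeriv_term_le (φ := φ) le_rfl n
  rw [inner_dirichletSineLp_heatFlow hτ.le, heatFlowDeriv,
    inner_dirichletSineLp_of_hasSum hsum.hasSum]
  ring

lemma absolutelyContinuousOnInterval_heatFlow_sub_const (hs : s < τ₀) (hT : τ₀ ≤ T) :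
    AbsolutelyContinuousOnInterval (fun σ => heatFlow φ (σ - s)) τ₀ T := by
  have hsum := (summable_dirichletEigenvalue_mul_exp_neg (sub_pos.2 hs)).mul_right ‖φ‖
  refine LipschitzOnWith.absolutelyContinuousOnInterval (K := (∑' n, dirichletEigenvalue n *
      Real.exp (-((τ₀ - s) * dirichletEigenvalue n)) * ‖φ‖).toNNReal)
    ((convex_uIcc τ₀ T).lipschitzOnWith_of_nnnorm_hasDerivWithin_le
      (f' := fun σ => heatFlowDeriv φ (σ - s)) (fun τ hτ => ?_) fun τ hτ => ?_) <;>
    rw [uIcc_of_le hT] at hτ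
  · exact ((hasDerivAt_heatFlow (sub_pos.2 (hs.trans_le hτ.1))).comp_sub_const τ s).hasDerivWithinAt
  · exact NNReal.le_toNNReal_of_coe_le (tsum_of_norm_bounded hsum.hasSum
      (norm_heatFlowDeriv_term_le (sub_le_sub_right hτ.1 s)))

lemma heatFlow_nonneg (hφ : 0 ≤ φ) (hτ : 0 < τ) : 0 ≤ heatFlow φ τ := by
  refine neg_nonpos.1 (nonpos_of_heat_subsolution (z := fun σ => -heatFlow φ σ) hτ
    (continuousOn_heatFlow.neg.mono Icc_subset_Ici_self)
    (fun s' hs' => ?_) ?_ ?_)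
  · simpa only [sub_zero] using
      (absolutelyContinuousOnInterval_heatFlow_sub_const (φ := φ) hs'.1 hs'.2.le).fun_neg
  · filter_upwards [ae_restrict_mem measurableSet_Ioo] with σ hσ
    exact ⟨_, _, (hasDerivAt_heatFlow hσ.1).neg, (inDomainA_heatFlow hσ.1).neg, le_rfl⟩
  · rwa [heatFlow_zero, neg_nonpos]

/-- `heatFlow φ τ` has an analytic representative, which cannot vanish on a set of positive
measure. -/
lemma heatFlow_pos (hφ : 0 ≤ φ) (hφ0 : φ ≠ 0) (hτ : 0 < τ) : ∀ᵐ x ∂μ01, 0 < heatFlow φ τ x := by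
  obtain ⟨f, hf, hfe⟩ := exists_analyticOnNhd_ae_eq_of_exp_decay (v := heatFlow φ τ) (C := ‖φ‖) hτ
    fun n => by
      rw [inner_dirichletSineLp_heatFlow hτ.le, abs_mul, Real.abs_exp, mul_comm]
      gcongr
      exact abs_inner_dirichletSineLp_le n φ
  obtain ⟨x, hx⟩ : ∃ x, f x ≠ 0 := by
    by_contra! hzero
    have hheat : heatFlow φ τ = 0 := Lp.ext <| hfe.symm.trans <|
      (EventuallyEq.of_eq (funext hzero)).trans (Lp.coeFn_zero ℝ 2 μ01).symm
    refine hφ0 (eq_zero_of_inner_dirichletSineLp fun n => ?_)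
    have hn := inner_dirichletSineLp_heatFlow (φ := φ) hτ.le n
    rw [hheat, inner_zero_right] at hn
    exact (mul_eq_zero.1 hn.symm).resolve_left (Real.exp_pos _).ne'
  filter_upwards [ae_restrict_of_ae (ae_ne_zero_of_analyticOnNhd hf hx), hfe,
    (Lp.coeFn_nonneg _).2 (heatFlow_nonneg hφ hτ)] with y hy hye hnonneg
  exact hnonneg.lt_of_ne' (hye ▸ hy)

end HeatFlow

namespace IsStrongSolutionWith

/-- A nonnegative solution has a nonnegative selection, hence is a supersolution of the heat
equation. -/
lemma heatFlow_le {b ω : ℝ → ℝ} {τ s t : ℝ} {u r u' uxx : ℝ → Hsp}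
    (h : IsStrongSolutionWith b ω τ u r u' uxx) (hb : ∀ t, 0 ≤ b t) (hω : ∀ t, 0 ≤ ω t)
    (hu : NonnegOn u τ) (hs : τ < s) (hst : s < t) : heatFlow (u s) (t - s) ≤ u t := by
  refine sub_nonpos.1 (nonpos_of_heat_subsolution (z := fun σ => heatFlow (u s) (σ - s) - u σ) hst
    (.sub ?_ (h.cont.mono fun σ hσ => hs.le.trans hσ.1)) (fun s' hs' => ?_) ?_ ?_)
  · exact continuousOn_heatFlow.comp (by fun_prop) fun σ hσ => sub_nonneg.2 hσ.1
  · exact (absolutelyContinuousOnInterval_heatFlow_sub_const hs'.1 hs'.2.le).fun_sub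
      (h.absolutelyContinuousOnInterval (hs.trans hs'.1) hs'.2)
  · filter_upwards [h.ae_hasDerivAt hs hst, ae_restrict_Ioo hs.le h.dom,
      h.ae_nonneg_selection hb hω hu hs hst, ae_restrict_mem measurableSet_Ioo]
      with σ hderiv hdom hr hσ
    have hσs : 0 < σ - s := sub_pos.2 hσ.1
    exact ⟨_, _, ((hasDerivAt_heatFlow hσs).comp_sub_const σ s).sub hderiv,
      (inDomainA_heatFlow hσs).sub hdom, sub_le_sub_left (le_add_of_nonneg_left hr) _⟩
  · rw [sub_self, heatFlow_zero, sub_self]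

lemma ae_pos {b ω : ℝ → ℝ} {τ s t : ℝ} {u r u' uxx : ℝ → Hsp}
    (h : IsStrongSolutionWith b ω τ u r u' uxx) (hb : ∀ t, 0 ≤ b t) (hω : ∀ t, 0 ≤ ω t)
    (hu : NonnegOn u τ) (hs : τ < s) (hst : s < t) (hne : u s ≠ 0) : ∀ᵐ x ∂μ01, 0 < u t x := by
  filter_upwards [heatFlow_pos (hu.nonneg hs.le) hne (sub_pos.2 hst),
    (Lp.coeFn_le _ _).2 (h.heatFlow_le hb hω hu hs hst)] with x hpos hle using hpos.trans_le hle

end IsStrongSolutionWith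

/-! ### The stationary solution -/

/-- The solution of `W'' + ω W = -b` on `[0,1]` with zero boundary values, for `0 ≤ ω` and
`cos (√ω / 2) ≠ 0`; the case `ω = 0` is singled out because the general formula divides by `ω`. -/
def stationarySolution (b ω x : ℝ) : ℝ :=
  if ω = 0 then b / 2 * (x - x ^ 2)
  else b / ω * (Real.cos (√ω * (x - 1 / 2)) / Real.cos (√ω / 2) - 1)

/-- The first derivative of `stationarySolution b ω`. -/
def stationarySolutionDeriv (b ω x : ℝ) : ℝ :=
  if ω = 0 then b / 2 * (1 - 2 * x)
  else -(b / ω * (√ω * Real.sin (√ω * (x - 1 / 2)) / Real.cos (√ω / 2)))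

section StationarySolution

variable {b ω : ℝ}

lemma analyticAt_stationarySolution (x : ℝ) : AnalyticAt ℝ (stationarySolution b ω) x := by
  unfold stationarySolution
  split_ifs <;> fun_prop

lemma hasDerivAt_stationarySolution (x : ℝ) :
    HasDerivAt (stationarySolution b ω) (stationarySolutionDeriv b ω x) x := by
  unfold stationarySolution stationarySolutionDeriv
  split_ifs
  · exact (((hasDerivAt_id' x).fun_sub (hasDerivAt_pow 2 x)).const_mul (b / 2)).congr_deriv
      (by norm_num)
  · exact (((((((hasDerivAt_id' x).sub_const (1 / 2)).const_mul √ω).cos).div_const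
      (Real.cos (√ω / 2))).sub_const 1).const_mul (b / ω)).congr_deriv (by ring)

lemma stationarySolution_zero (hc : Real.cos (√ω / 2) ≠ 0) : stationarySolution b ω 0 = 0 := by
  rw [stationarySolution, show √ω * (0 - 1 / 2) = -(√ω / 2) by ring, Real.cos_neg, div_self hc]
  simp

lemma stationarySolution_one (hc : Real.cos (√ω / 2) ≠ 0) : stationarySolution b ω 1 = 0 := by
  rw [stationarySolution, show √ω * (1 - 1 / 2) = √ω / 2 by ring, div_self hc]
  simp

lemma hasDerivAt_stationarySolutionDeriv (hω : 0 ≤ ω) (hc : Real.cos (√ω / 2) ≠ 0) (x : ℝ) :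
    HasDerivAt (stationarySolutionDeriv b ω) (-(b + ω * stationarySolution b ω x)) x := by
  unfold stationarySolution stationarySolutionDeriv
  split_ifs with h0
  · exact ((((hasDerivAt_id' x).const_mul 2).const_sub 1).const_mul (b / 2)).congr_deriv
      (by rw [h0]; ring)
  · refine ((((((((hasDerivAt_id' x).sub_const (1 / 2)).const_mul √ω).sin).const_mul √ω).div_const
      (Real.cos (√ω / 2))).const_mul (b / ω)).fun_neg).congr_deriv ?_
    field_simp
    rw [Real.sq_sqrt hω]
    ring

lemma memLp_stationarySolution : MemLp (stationarySolution b ω) 2 μ01 :=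
  memLp_μ01_of_continuousOn fun x _ =>
    (analyticAt_stationarySolution x).continuousAt.continuousWithinAt

variable (b ω) in
/-- `stationarySolution b ω` as an element of `L²(0,1)`. -/
def stationarySolutionLp : Hsp := memLp_stationarySolution.toLp (stationarySolution b ω)

lemma inDomainA_stationarySolutionLp (hω : 0 ≤ ω) (hc : Real.cos (√ω / 2) ≠ 0) :
    InDomainA (stationarySolutionLp b ω) (-(Lp.const 2 μ01 b + ω • stationarySolutionLp b ω)) := by
  have hderiv := hasDerivAt_stationarySolutionDeriv (b := b) hω hc
  have hcont : Continuous (stationarySolution b ω) :=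
    continuous_iff_continuousAt.2 fun x => (analyticAt_stationarySolution x).continuousAt
  refine IsDirichletRepresentative.inDomainA (V := stationarySolution b ω)
    (G := stationarySolutionDeriv b ω) ⟨hasDerivAt_stationarySolution,
      continuous_iff_continuousAt.2 fun x => (hderiv x).continuousAt, ?_, ?_,
      stationarySolution_zero hc, stationarySolution_one hc,
      memLp_stationarySolution.coeFn_toLp.symm⟩
  · refine ContDiffOn.absolutelyContinuousOnInterval (ContDiff.contDiffOn ?_)
    refine contDiff_one_iff_deriv.2 ⟨fun x => (hderiv x).differentiableAt, ?_⟩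
    rw [funext fun x => (hderiv x).deriv]
    fun_prop
  · filter_upwards [Lp.coeFn_neg (Lp.const 2 μ01 b + ω • stationarySolutionLp b ω),
      Lp.coeFn_add (Lp.const 2 μ01 b) (ω • stationarySolutionLp b ω), Lp.coeFn_const 2 μ01 b,
      Lp.coeFn_smul ω (stationarySolutionLp b ω),
      memLp_stationarySolution.coeFn_toLp (f := stationarySolution b ω)]
      with x hneg hadd hconst hsmul hW
    refine (hderiv x).congr_deriv ?_
    rw [hneg, Pi.neg_apply, hadd, Pi.add_apply, hconst, hsmul, Pi.smul_apply, smul_eq_mul,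
      stationarySolutionLp, hW, Function.const_apply]

lemma cos_sqrt_half_pos (hωπ : ω < π ^ 2) : 0 < Real.cos (√ω / 2) := by
  have hlt : √ω < π := (Real.sqrt_lt' Real.pi_pos).2 hωπ
  exact Real.cos_pos_of_mem_Ioo ⟨by linarith [Real.sqrt_nonneg ω], by linarith⟩

end StationarySolution

/-! ### Regularity of nonnegative solutions -/

lemma eq_exp_mul_of_ae_hasDerivAt {c : ℝ → ℝ} {k s t : ℝ} (hst : s < t)
    (hac : AbsolutelyContinuousOnInterval c s t)
    (hc : ∀ᵐ σ ∂(volume.restrict (Ioo s t)), HasDerivAt c (-k * c σ) σ) :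
    c t = Real.exp (-(k * (t - s))) * c s := by
  have hexp : AbsolutelyContinuousOnInterval (fun σ => Real.exp (k * (σ - s))) s t :=
    ContDiffOn.absolutelyContinuousOnInterval (ContDiff.contDiffOn (by fun_prop))
  obtain ⟨C, hC⟩ := (hexp.fun_mul hac).const_of_ae_hasDerivAt_zero (by
    rw [uIcc_of_le hst.le, ← ae_restrict_iff' measurableSet_Icc, ← restrict_Ioo_eq_restrict_Icc]
    filter_upwards [hc] with σ hσ
    exact ((((hasDerivAt_id' σ).sub_const s).const_mul k).exp.fun_mul hσ).congr_deriv (by ring))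
  have hconst : Real.exp (k * (t - s)) * c t = c s := by
    rw [hC t right_mem_uIcc, ← hC s left_mem_uIcc, sub_self, mul_zero, Real.exp_zero, one_mul]
  rw [← hconst, ← mul_assoc, ← Real.exp_add, neg_add_cancel, Real.exp_zero, one_mul]

namespace IsStrongSolutionWith

variable {b ω τ s t : ℝ} {u r u' uxx : ℝ → Hsp}

lemma ae_selection_eq
    (h : IsStrongSolutionWith (fun _ => b) (fun _ => ω) τ u r u' uxx) (hs : τ ≤ s)
    (hpos : ∀ σ ∈ Ioo s t, ∀ᵐ x ∂μ01, 0 < u σ x) :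
    ∀ᵐ σ ∂(volume.restrict (Ioo s t)), r σ = Lp.const 2 μ01 b + ω • u σ := by
  filter_upwards [ae_restrict_Ioo hs h.sel, ae_restrict_mem measurableSet_Ioo] with σ hsel hσ
  refine Lp.ext ?_
  filter_upwards [hsel, hpos σ hσ, Lp.coeFn_const 2 μ01 b, Lp.coeFn_smul ω (u σ),
    Lp.coeFn_add (Lp.const 2 μ01 b) (ω • u σ)] with x ⟨k, hk, hr⟩ hx hconst hsmul hadd
  rw [hr, eq_one_of_mem_heaviside hx hk, mul_one, hadd, Pi.add_apply, hconst, hsmul]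
  rfl

/-- As long as the solution is positive, `u - W` solves the linear equation `y' = y_xx + ω y`. -/
lemma inner_sub_stationarySolutionLp
    (h : IsStrongSolutionWith (fun _ => b) (fun _ => ω) τ u r u' uxx) (hω : 0 ≤ ω)
    (hc : Real.cos (√ω / 2) ≠ 0)
    (hs : τ < s) (hst : s < t) (hpos : ∀ σ ∈ Ioo s t, ∀ᵐ x ∂μ01, 0 < u σ x) (n : ℕ) :
    ⟪dirichletSineLp n, u t - stationarySolutionLp b ω⟫_ℝ =
      Real.exp (-((dirichletEigenvalue n - ω) * (t - s))) *
        ⟪dirichletSineLp n, u s - stationarySolutionLp b ω⟫_ℝ := by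
  refine eq_exp_mul_of_ae_hasDerivAt
    (c := fun σ => ⟪dirichletSineLp n, u σ - stationarySolutionLp b ω⟫_ℝ) hst ?_ ?_
  · refine absolutelyContinuousOnInterval_of_dist_le (h.absolutelyContinuousOnInterval hs hst)
      fun x _ y _ => ?_
    rw [Real.dist_eq, ← inner_sub_right, sub_sub_sub_cancel_right, dist_eq_norm]
    exact abs_inner_dirichletSineLp_le n _
  · filter_upwards [h.ae_hasDerivAt hs hst, ae_restrict_Ioo hs.le h.dom,
      h.ae_selection_eq hs.le hpos] with σ hderiv hdom hr
    have hdomy := hdom.sub (inDomainA_stationarySolutionLp (b := b) hω hc)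
    have hrhs : r σ + uxx σ = (uxx σ - -(Lp.const 2 μ01 b + ω • stationarySolutionLp b ω)) +
        ω • (u σ - stationarySolutionLp b ω) := by
      rw [hr]
      module
    refine ((innerSL ℝ (dirichletSineLp n)).hasFDerivAt.comp_hasDerivAt σ
      (hderiv.sub_const (stationarySolutionLp b ω))).congr_deriv ?_
    rw [innerSL_apply_apply, hrhs, inner_add_right, hdomy.inner_dirichletSineLp, inner_smul_right]
    ring

lemma exists_analyticOnNhd_ae_eq_of_pos
    (h : IsStrongSolutionWith (fun _ => b) (fun _ => ω) τ u r u' uxx) (hω : 0 ≤ ω)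
    (hc : Real.cos (√ω / 2) ≠ 0)
    (hs : τ < s) (hst : s < t) (hpos : ∀ σ ∈ Ioo s t, ∀ᵐ x ∂μ01, 0 < u σ x) :
    ∃ f : ℝ → ℝ, AnalyticOnNhd ℝ f univ ∧ f =ᵐ[μ01] u t := by
  obtain ⟨f, hf, hfu⟩ := exists_analyticOnNhd_ae_eq_of_exp_decay
    (v := u t - stationarySolutionLp b ω)
    (C := Real.exp (ω * (t - s)) * ‖u s - stationarySolutionLp b ω‖) (sub_pos.2 hst) fun n => by
      rw [h.inner_sub_stationarySolutionLp hω hc hs hst hpos, abs_mul, Real.abs_exp,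
        show -((dirichletEigenvalue n - ω) * (t - s)) =
          ω * (t - s) + -((t - s) * dirichletEigenvalue n) by ring, Real.exp_add, mul_right_comm]
      gcongr
      exact abs_inner_dirichletSineLp_le n _
  refine ⟨f + stationarySolution b ω,
    hf.add fun x _ => analyticAt_stationarySolution x, ?_⟩
  filter_upwards [hfu, Lp.coeFn_sub (u t) (stationarySolutionLp b ω),
    memLp_stationarySolution.coeFn_toLp (f := stationarySolution b ω)] with x hx hsub hW
  rw [Pi.add_apply, hx, hsub, Pi.sub_apply, stationarySolutionLp, hW, sub_add_cancel]

lemma exists_analyticOnNhd_ae_eq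
    (h : IsStrongSolutionWith (fun _ => b) (fun _ => ω) τ u r u' uxx) (hu : NonnegOn u τ)
    (hb : 0 ≤ b) (hω : 0 ≤ ω) (hc : Real.cos (√ω / 2) ≠ 0) (ht : τ < t) :
    ∃ f : ℝ → ℝ, AnalyticOnNhd ℝ f univ ∧ f =ᵐ[μ01] u t := by
  rcases eq_or_ne (u t) 0 with hzero | hne
  · exact ⟨0, analyticOnNhd_const, hzero ▸ (Lp.coeFn_zero ℝ 2 μ01).symm⟩
  have hcont : ContinuousAt u t := h.cont.continuousAt (Ici_mem_nhds ht)
  obtain ⟨s, hus, hs, hst⟩ : ∃ s, u s ≠ 0 ∧ τ < s ∧ s < t :=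
    ((hcont.eventually_ne hne).filter_mono nhdsWithin_le_nhds |>.and (Ioo_mem_nhdsLT ht)).exists
  exact h.exists_analyticOnNhd_ae_eq_of_pos hω hc hs hst fun σ hσ =>
    h.ae_pos (fun _ => hb) (fun _ => hω) hu hs hσ.1 hus

end IsStrongSolutionWith

theorem statement11_general {b ω t : ℝ} (hb : 0 ≤ b) (hω : 0 ≤ ω)
    (hc : Real.cos (√ω / 2) ≠ 0) (ht : 0 < t) {S : Set Hsp} : ∀ v ∈ autGplus b ω t S,
      ∃ vt : ℝ → ℝ, AnalyticOnNhd ℝ vt univ ∧ ∀ᵐ x ∂μ01, vt x = v x := by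
  rintro _ ⟨u, -, ⟨r, u', uxx, h⟩, hu, rfl⟩
  exact h.exists_analyticOnNhd_ae_eq hu hb hω hc ht

/-- in the autonomous case with `ω < π²`, the global attractor
`𝒜⁺` of the semiflow of non-negative solutions consists of `C^∞` functions on
`[0,1]`. -/
theorem statement11
    (b ω : ℝ) (hb : 0 < b) (hω : 0 ≤ ω) (hωπ : ω < Real.pi ^ 2)
    (𝒜 : Set Hsp) (hattr : IsGlobalAttractorPlus b ω 𝒜) :
    ∀ v ∈ 𝒜, ∃ vt : ℝ → ℝ,
      ContDiffOn ℝ (⊤ : ℕ∞) vt (Icc (0:ℝ) 1) ∧ ∀ᵐ x ∂μ01, vt x = v x := by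
  intro v hv
  rw [← hattr.invariant 1 zero_le_one] at hv
  obtain ⟨vt, han, hvt⟩ := statement11_general hb.le hω (cos_sqrt_half_pos hωπ).ne' one_pos v hv
  exact ⟨vt, han.contDiff.contDiffOn, hvt⟩

end
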